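/- arXiv:1512.04680 — 2 statements merged into one kernel-verified Lean document; each statement's English description precedes it below -/
import Mathlib

section
/- Suppose N = 1 (scalar blocks) and each A_k ∈ ℝ^M is a nonzero vector, so that L_k = ‖A_k‖². Then for every r ≥ 0 the cyclic exact BCD iterates satisfy Δ^{(r+1)} ≤ 3 · max{ Δ^{(0)}, 2 R_0² · log²(2K) · (L²/L_min + L_max²/L_min) } / (r+1), where Δ^{(r)} := f(x^{(r)}) − f*. -/
open Finset

/-- Squared Euclidean norm of a vector in `ℝ^n`. -/
noncomputable def sqnorm {n : ℕ} (v : Fin n → ℝ) : ℝ := ∑ i, v i ^ 2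

/-- `λ_max(AᵀA)` for `A = [A_1 ⋯ A_K]` with scalar blocks (`A_k ∈ ℝ^M`),
characterized as the maximum of `‖Av‖²` over unit vectors `v ∈ ℝ^K`. -/
noncomputable def lamMaxS {K M : ℕ} (A : Fin K → Fin M → ℝ) : ℝ :=
  sSup {r : ℝ | ∃ v : Fin K → ℝ, sqnorm v = 1 ∧ r = sqnorm (∑ k, v k • A k)}

/-- Maximum of a finite family of reals indexed by `Fin K`, `K ≥ 1`. -/
noncomputable def maxOf {K : ℕ} (hK : 1 ≤ K) (P : Fin K → ℝ) : ℝ :=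
  Finset.univ.sup' (Finset.univ_nonempty_iff.mpr ⟨⟨0, hK⟩⟩) P

/-- Minimum of a finite family of reals indexed by `Fin K`, `K ≥ 1`. -/
noncomputable def minOf {K : ℕ} (hK : 1 ≤ K) (P : Fin K → ℝ) : ℝ :=
  Finset.univ.inf' (Finset.univ_nonempty_iff.mpr ⟨⟨0, hK⟩⟩) P

/-- The smooth part `g(x) = (1/2)‖Σ_k A_k x_k − b‖²` with scalar blocks. -/
noncomputable def gs {K M : ℕ} (A : Fin K → Fin M → ℝ) (b : Fin M → ℝ)
    (x : Fin K → ℝ) : ℝ :=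
  (1 / 2) * sqnorm ((∑ k, x k • A k) - b)

/-- The objective `f(x) = g(x) + Σ_k h_k(x_k)` with scalar blocks. -/
noncomputable def fs {K M : ℕ} (A : Fin K → Fin M → ℝ) (b : Fin M → ℝ)
    (h : Fin K → ℝ → ℝ) (x : Fin K → ℝ) : ℝ :=
  gs A b x + ∑ k, h k (x k)

/-- The intermediate point of the cycle: coordinates `j < k` come from `xp`,
the remaining ones from `x`. -/
def wpt {K : ℕ} (x xp : Fin K → ℝ) (k : Fin K) : Fin K → ℝ :=
  fun j => if j < k then xp j else x j

/-- One cycle of cyclic exact BCD with scalar blocks. -/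
def BCDStepS {K M : ℕ} (A : Fin K → Fin M → ℝ) (b : Fin M → ℝ)
    (h : Fin K → ℝ → ℝ) (X : Fin K → Set ℝ) (x xp : Fin K → ℝ) : Prop :=
  ∀ k : Fin K, xp k ∈ X k ∧ ∀ t ∈ X k,
    fs A b h (Function.update (wpt x xp k) k (xp k)) ≤
      fs A b h (Function.update (wpt x xp k) k t)

lemma sqnorm_eq {n : ℕ} (v : Fin n → ℝ) : sqnorm v = v ⬝ᵥ v := by
  simp [sqnorm, dotProduct, pow_two]

lemma sqnorm_nonneg' {n : ℕ} (v : Fin n → ℝ) : 0 ≤ sqnorm v :=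
  Finset.sum_nonneg fun _ _ => sq_nonneg _

lemma sqnorm_smul' {n : ℕ} (c : ℝ) (v : Fin n → ℝ) : sqnorm (c • v) = c ^ 2 * sqnorm v := by
  simp [sqnorm, mul_pow, Finset.mul_sum]

lemma sqnorm_add' {n : ℕ} (u v : Fin n → ℝ) :
    sqnorm (u + v) = sqnorm u + 2 * (u ⬝ᵥ v) + sqnorm v := by
  simp only [sqnorm_eq, add_dotProduct, dotProduct_add, dotProduct_comm v u]; ring

lemma sqnorm_sub' {n : ℕ} (u v : Fin n → ℝ) :
    sqnorm (u - v) = sqnorm u - 2 * (u ⬝ᵥ v) + sqnorm v := by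
  simp only [sqnorm_eq, sub_dotProduct, dotProduct_sub, dotProduct_comm v u]; ring

lemma sqnorm_pos' {n : ℕ} {v : Fin n → ℝ} (hv : v ≠ 0) : 0 < sqnorm v := by
  rcases (sqnorm_nonneg' v).lt_or_eq with h | h
  · exact h
  · exact absurd (dotProduct_self_eq_zero.mp ((sqnorm_eq v).symm.trans h.symm)) hv

lemma sqnorm_comb_le {K M : ℕ} (A : Fin K → Fin M → ℝ) (v : Fin K → ℝ) :
    sqnorm (∑ k, v k • A k) ≤ sqnorm v * ∑ k, sqnorm (A k) := by
  have : ∑ k, sqnorm (A k) = ∑ i, ∑ k, A k i ^ 2 := by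
    simp only [sqnorm]; exact Finset.sum_comm
  rw [this, Finset.mul_sum, sqnorm]
  refine Finset.sum_le_sum fun i _ => ?_
  simp only [Finset.sum_apply, Pi.smul_apply, smul_eq_mul, sqnorm]
  exact Finset.sum_mul_sq_le_sq_mul_sq _ _ _

lemma comb_le_lam {K M : ℕ} (A : Fin K → Fin M → ℝ) (v : Fin K → ℝ) :
    sqnorm (∑ k, v k • A k) ≤ lamMaxS A * sqnorm v := by
  by_cases hv : v = 0
  · subst hv; simp [sqnorm]
  have hp := sqnorm_pos' hv
  set c := (Real.sqrt (sqnorm v))⁻¹ with hc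
  have hc2 : c ^ 2 = (sqnorm v)⁻¹ := by rw [hc, inv_pow, Real.sq_sqrt hp.le]
  have h1 : sqnorm (∑ k, (c • v) k • A k) ≤ lamMaxS A := by
    apply le_csSup
    · refine ⟨∑ k, sqnorm (A k), ?_⟩
      rintro r ⟨w, hw, rfl⟩
      simpa [hw] using sqnorm_comb_le A w
    · refine ⟨c • v, ?_, rfl⟩
      rw [sqnorm_smul', hc2, inv_mul_cancel₀ hp.ne']
  have h2 : ∑ k, (c • v) k • A k = c • ∑ k, v k • A k := by
    simp [Finset.smul_sum, mul_smul]
  rw [h2, sqnorm_smul', hc2, inv_mul_le_iff₀ hp] at h1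
  linarith

lemma lam_nonneg {K M : ℕ} (A : Fin K → Fin M → ℝ) : 0 ≤ lamMaxS A := by
  apply Real.sSup_nonneg
  rintro r ⟨w, hw, rfl⟩
  exact sqnorm_nonneg' _

/-- cross term bound -/
lemma cross_le {K M : ℕ} (A : Fin K → Fin M → ℝ) (s t : Finset (Fin K)) (hst : Disjoint s t)
    (e d : Fin K → ℝ) :
    ∑ j ∈ s, ∑ k ∈ t, e j * d k * (A j ⬝ᵥ A k) ≤
      lamMaxS A / 4 * (∑ j ∈ s, e j ^ 2 + ∑ k ∈ t, d k ^ 2) := by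
  classical
  set u : Fin M → ℝ := ∑ j ∈ s, e j • A j with hu
  set v : Fin M → ℝ := ∑ j ∈ t, d j • A j with hv
  have h1 : ∑ j ∈ s, ∑ k ∈ t, e j * d k * (A j ⬝ᵥ A k) = u ⬝ᵥ v := by
    rw [hu, hv, sum_dotProduct]
    refine Finset.sum_congr rfl fun j _ => ?_
    rw [dotProduct_sum]
    refine Finset.sum_congr rfl fun k _ => ?_
    simp only [smul_dotProduct, dotProduct_smul, smul_eq_mul]; ring
  let w : Fin K → ℝ := fun j => (if j ∈ s then e j else 0) + (if j ∈ t then d j else 0)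
  have h2 : ∑ k, w k • A k = u + v := by
    simp only [w, add_smul, Finset.sum_add_distrib, ite_smul, zero_smul, Finset.sum_ite_mem,
      Finset.univ_inter, hu, hv]
  have h3 : sqnorm w = ∑ j ∈ s, e j ^ 2 + ∑ k ∈ t, d k ^ 2 := by
    have : ∀ j, w j ^ 2 = (if j ∈ s then e j ^ 2 else 0) + (if j ∈ t then d j ^ 2 else 0) := by
      intro j
      by_cases hs : j ∈ s
      · have := Finset.disjoint_left.mp hst hs
        simp [w, hs, this]
      · by_cases ht : j ∈ t <;> simp [w, hs, ht]
    simp only [sqnorm, this, Finset.sum_add_distrib, Finset.sum_ite_mem, Finset.univ_inter]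
  have h4 := comb_le_lam A w
  rw [h2, h3, sqnorm_add'] at h4
  have h5 := sqnorm_nonneg' (u - v)
  rw [sqnorm_sub'] at h5
  rw [h1]; linarith

lemma tri_le {K M : ℕ} (A : Fin K → Fin M → ℝ) (e d : Fin K → ℝ) (m : ℕ) : ∀ a : ℕ,
    ∑ j ∈ univ.filter (fun j : Fin K => a ≤ j.val ∧ j.val < a + 2 ^ m),
      ∑ k ∈ univ.filter (fun j : Fin K => a ≤ j.val ∧ j.val < a + 2 ^ m),
        (if j < k then e j * d k * (A j ⬝ᵥ A k) else 0) ≤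
      m * (lamMaxS A / 4) *
        ∑ j ∈ univ.filter (fun j : Fin K => a ≤ j.val ∧ j.val < a + 2 ^ m),
          (e j ^ 2 + d j ^ 2) := by
  classical
  induction m with
  | zero =>
    intro a
    simp only [CharP.cast_eq_zero, zero_mul]
    apply le_of_eq
    refine Finset.sum_eq_zero fun j hj => Finset.sum_eq_zero fun k hk => ?_
    simp only [Finset.mem_filter, Finset.mem_univ, true_and, pow_zero] at hj hk
    rw [if_neg]
    rw [Fin.lt_def]; omega
  | succ m ih =>
    intro a
    have i1 := ih a
    have i2 := ih (a + 2 ^ m)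
    set s := univ.filter (fun j : Fin K => a ≤ j.val ∧ j.val < a + 2 ^ m) with hs
    set t := univ.filter (fun j : Fin K => a + 2 ^ m ≤ j.val ∧ j.val < a + 2 ^ m + 2 ^ m) with ht
    have hst : Disjoint s t := by
      rw [Finset.disjoint_left]
      intro j hj hj'
      simp only [hs, ht, Finset.mem_filter, Finset.mem_univ, true_and] at hj hj'
      omega
    have hU : univ.filter (fun j : Fin K => a ≤ j.val ∧ j.val < a + 2 ^ (m + 1)) = s ∪ t := by
      ext j
      simp only [hs, ht, Finset.mem_filter, Finset.mem_univ, true_and, Finset.mem_union, pow_succ]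
      have := Nat.two_pow_pos m
      omega
    rw [hU]
    simp only [Finset.sum_union hst, Finset.sum_add_distrib]
    have c12 : ∑ j ∈ s, ∑ k ∈ t, (if j < k then e j * d k * (A j ⬝ᵥ A k) else 0) =
        ∑ j ∈ s, ∑ k ∈ t, e j * d k * (A j ⬝ᵥ A k) := by
      refine Finset.sum_congr rfl fun j hj => Finset.sum_congr rfl fun k hk => ?_
      simp only [hs, ht, Finset.mem_filter, Finset.mem_univ, true_and] at hj hk
      rw [if_pos]
      rw [Fin.lt_def]; omega
    have c21 : ∑ j ∈ t, ∑ k ∈ s, (if j < k then e j * d k * (A j ⬝ᵥ A k) else 0) = 0 := by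
      refine Finset.sum_eq_zero fun j hj => Finset.sum_eq_zero fun k hk => ?_
      simp only [hs, ht, Finset.mem_filter, Finset.mem_univ, true_and] at hj hk
      rw [if_neg]
      rw [Fin.lt_def]; omega
    have hc := cross_le A s t hst e d
    rw [c12, c21]
    simp only [Finset.sum_add_distrib] at i1 i2
    have q1 : 0 ≤ ∑ j ∈ t, e j ^ 2 := Finset.sum_nonneg fun _ _ => sq_nonneg _
    have q2 : 0 ≤ ∑ j ∈ s, d j ^ 2 := Finset.sum_nonneg fun _ _ => sq_nonneg _
    have hL : 0 ≤ lamMaxS A / 4 := by have := lam_nonneg A; positivity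
    have q3 := mul_nonneg hL q1
    have q4 := mul_nonneg hL q2
    push_cast
    linarith

lemma tri_full {K M : ℕ} (A : Fin K → Fin M → ℝ) (e d : Fin K → ℝ) (m : ℕ) (hm : K ≤ 2 ^ m) :
    ∑ j, ∑ k, (if j < k then e j * d k * (A j ⬝ᵥ A k) else 0) ≤
      m * (lamMaxS A / 4) * (sqnorm e + sqnorm d) := by
  have h := tri_le A e d m 0
  have hU : univ.filter (fun j : Fin K => 0 ≤ j.val ∧ j.val < 0 + 2 ^ m) = univ := by
    ext j; have := j.isLt
    simp only [Finset.mem_filter, Finset.mem_univ, true_and, iff_true]; omega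
  rw [hU, Finset.sum_add_distrib] at h
  exact h

lemma tri_sq {K M : ℕ} (A : Fin K → Fin M → ℝ) (e d : Fin K → ℝ) (m : ℕ) (hm : K ≤ 2 ^ m) :
    (∑ j, ∑ k, (if j < k then e j * d k * (A j ⬝ᵥ A k) else 0)) ^ 2 ≤
      (m * lamMaxS A / 2) ^ 2 * sqnorm e * sqnorm d := by
  set S := ∑ j, ∑ k, (if j < k then e j * d k * (A j ⬝ᵥ A k) else 0) with hS
  set c := m * (lamMaxS A / 4) with hc
  have key : ∀ s : ℝ, 0 ≤ (c * sqnorm e) * (s * s) + (-S) * s + c * sqnorm d := by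
    intro s
    have h := tri_full A (s • e) d m hm
    rw [sqnorm_smul'] at h
    have : ∑ j, ∑ k, (if j < k then (s • e) j * d k * (A j ⬝ᵥ A k) else 0) = s * S := by
      rw [hS, Finset.mul_sum]
      refine Finset.sum_congr rfl fun j _ => ?_
      rw [Finset.mul_sum]
      refine Finset.sum_congr rfl fun k _ => ?_
      split_ifs <;> simp [mul_assoc]
    rw [this, ← hc] at h
    nlinarith
  have := discrim_le_zero key
  rw [discrim] at this
  have e1 : (m * lamMaxS A / 2) ^ 2 * sqnorm e * sqnorm d = 4 * (c * sqnorm e) * (c * sqnorm d) := by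
    rw [hc]; ring
  rw [e1]; nlinarith

lemma gs_shift {K M : ℕ} (A : Fin K → Fin M → ℝ) (b : Fin M → ℝ) (x v : Fin K → ℝ) :
    gs A b (x + v) = gs A b x + (∑ k, v k * (A k ⬝ᵥ ((∑ k, x k • A k) - b)))
      + 1 / 2 * sqnorm (∑ k, v k • A k) := by
  have h1 : (∑ k, (x + v) k • A k) - b = ((∑ k, x k • A k) - b) + ∑ k, v k • A k := by
    simp only [Pi.add_apply, add_smul, Finset.sum_add_distrib]; abel
  have h2 : ∑ k, v k * (A k ⬝ᵥ ((∑ k, x k • A k) - b)) =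
      ((∑ k, x k • A k) - b) ⬝ᵥ ∑ k, v k • A k := by
    rw [dotProduct_sum]
    refine Finset.sum_congr rfl fun k _ => ?_
    rw [dotProduct_smul, smul_eq_mul, dotProduct_comm]
  rw [gs, h1, sqnorm_add', h2, gs]; ring

lemma fs_update {K M : ℕ} (A : Fin K → Fin M → ℝ) (b : Fin M → ℝ) (h : Fin K → ℝ → ℝ)
    (w : Fin K → ℝ) (k : Fin K) (t : ℝ) :
    fs A b h (Function.update w k t) = fs A b h w
      + (t - w k) * (A k ⬝ᵥ ((∑ j, w j • A j) - b)) + 1 / 2 * (t - w k) ^ 2 * sqnorm (A k)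
      + (h k t - h k (w k)) := by
  classical
  have h1 : Function.update w k t = w + Pi.single k (t - w k) := by
    ext j
    by_cases hj : j = k
    · subst hj; simp
    · simp [hj]
  have h2 : ∑ j, h j (Function.update w k t j) = ∑ j, h j (w j) + (h k t - h k (w k)) := by
    rw [← Finset.add_sum_erase _ _ (Finset.mem_univ k),
      ← Finset.add_sum_erase _ (fun j => h j (w j)) (Finset.mem_univ k)]
    have : ∑ j ∈ univ.erase k, h j (Function.update w k t j) = ∑ j ∈ univ.erase k, h j (w j) := by
      refine Finset.sum_congr rfl fun j hj => ?_
      rw [Function.update_of_ne (Finset.ne_of_mem_erase hj)]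
    rw [this]; simp; ring
  rw [fs, h2, h1, gs_shift, fs]
  have h3 : ∑ j, (Pi.single k (t - w k) : Fin K → ℝ) j * (A j ⬝ᵥ ((∑ j, w j • A j) - b)) =
      (t - w k) * (A k ⬝ᵥ ((∑ j, w j • A j) - b)) := by
    rw [Finset.sum_eq_single k] <;> simp +contextual
  have h4 : ∑ j, (Pi.single k (t - w k) : Fin K → ℝ) j • A j = (t - w k) • A k := by
    rw [Finset.sum_eq_single k] <;> simp +contextual
  rw [h3, h4, sqnorm_smul']; ring

/-- coordinate variational inequality -/
lemma coord_vi {K M : ℕ} (A : Fin K → Fin M → ℝ) (b : Fin M → ℝ) (h : Fin K → ℝ → ℝ)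
    (k : Fin K) (Xk : Set ℝ) (hX : Convex ℝ Xk) (hh : ConvexOn ℝ Set.univ (h k))
    (w : Fin K → ℝ) (hw : w k ∈ Xk)
    (hmin : ∀ t ∈ Xk, fs A b h w ≤ fs A b h (Function.update w k t)) (t : ℝ) (ht : t ∈ Xk) :
    0 ≤ (t - w k) * (A k ⬝ᵥ ((∑ j, w j • A j) - b)) + (h k t - h k (w k)) := by
  set V := (t - w k) * (A k ⬝ᵥ ((∑ j, w j • A j) - b)) + (h k t - h k (w k)) with hV
  set c := 1 / 2 * (t - w k) ^ 2 * sqnorm (A k) with hc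
  have hc0 : 0 ≤ c := by have := sqnorm_nonneg' (A k); positivity
  have key : ∀ l : ℝ, 0 < l → l ≤ 1 → 0 ≤ V + l * c := by
    intro l hl hl1
    have hmem : (1 - l) • w k + l • t ∈ Xk := hX hw ht (by linarith) hl.le (by ring)
    have hconv := hh.2 (Set.mem_univ (w k)) (Set.mem_univ t) (by linarith : 0 ≤ 1 - l) hl.le
      (by ring)
    have h0 := hmin _ hmem
    rw [fs_update] at h0
    simp only [smul_eq_mul] at h0 hconv
    have e1 : (1 - l) * w k + l * t - w k = l * (t - w k) := by ring
    rw [e1] at h0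
    have : 0 ≤ l * (V + l * c) := by
      rw [hV, hc]; nlinarith
    exact nonneg_of_mul_nonneg_right this hl
  by_contra hneg
  push Not at hneg
  by_cases hc1 : c = 0
  · have := key 1 one_pos le_rfl
    rw [hc1] at this; linarith
  have hcp : 0 < c := lt_of_le_of_ne hc0 (Ne.symm hc1)
  have h2 := key (min 1 (-V / (2 * c))) (lt_min one_pos (div_pos (by linarith) (by linarith)))
    (min_le_left _ _)
  have h3 : min 1 (-V / (2 * c)) * c ≤ -V / (2 * c) * c :=
    mul_le_mul_of_nonneg_right (min_le_right _ _) hc0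
  have h4 : -V / (2 * c) * c = -V / 2 := by field_simp
  linarith

def Wn {K : ℕ} (x xp : Fin K → ℝ) (n : ℕ) : Fin K → ℝ :=
  fun j => if j.val < n then xp j else x j

lemma Wn_succ {K : ℕ} (x xp : Fin K → ℝ) (k : Fin K) :
    Function.update (wpt x xp k) k (xp k) = Wn x xp (k.val + 1) := by
  ext j
  by_cases hj : j = k
  · subst hj; simp [Wn]
  · rw [Function.update_of_ne hj]
    have : j.val ≠ k.val := fun h => hj (Fin.ext h)
    simp only [wpt, Wn, Fin.lt_def]
    have : (j.val < k.val) ↔ j.val < k.val + 1 := by omega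
    simp [this]

lemma Wn_upd {K : ℕ} (x xp : Fin K → ℝ) (k : Fin K) :
    Function.update (Wn x xp (k.val + 1)) k (x k) = Wn x xp k.val := by
  ext j
  by_cases hj : j = k
  · subst hj; simp [Wn]
  · rw [Function.update_of_ne hj]
    have : j.val ≠ k.val := fun h => hj (Fin.ext h)
    simp only [Wn]
    have : (j.val < k.val + 1) ↔ j.val < k.val := by omega
    simp [this]

lemma step_vi {K M : ℕ} (A : Fin K → Fin M → ℝ) (b : Fin M → ℝ) (h : Fin K → ℝ → ℝ)
    (X : Fin K → Set ℝ) (hXcv : ∀ k, Convex ℝ (X k)) (hhcv : ∀ k, ConvexOn ℝ Set.univ (h k))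
    (x xp : Fin K → ℝ) (hs : BCDStepS A b h X x xp) (k : Fin K) (t : ℝ) (ht : t ∈ X k) :
    0 ≤ (t - xp k) * (A k ⬝ᵥ ((∑ j, Wn x xp (k.val + 1) j • A j) - b))
      + (h k t - h k (xp k)) := by
  have hk : Wn x xp (k.val + 1) k = xp k := by simp [Wn]
  have := coord_vi A b h k (X k) (hXcv k) (hhcv k) (Wn x xp (k.val + 1))
    (by rw [hk]; exact (hs k).1) (by
      intro t ht
      have := (hs k).2 t ht
      rw [Wn_succ] at this
      rw [← Wn_succ, Function.update_idem, Wn_succ]; exact this) t ht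
  rwa [hk] at this

lemma step_descent {K M : ℕ} (A : Fin K → Fin M → ℝ) (b : Fin M → ℝ) (h : Fin K → ℝ → ℝ)
    (X : Fin K → Set ℝ) (hXcv : ∀ k, Convex ℝ (X k)) (hhcv : ∀ k, ConvexOn ℝ Set.univ (h k))
    (x xp : Fin K → ℝ) (hx : ∀ k, x k ∈ X k) (hs : BCDStepS A b h X x xp) :
    ∑ k, 1 / 2 * (x k - xp k) ^ 2 * sqnorm (A k) ≤ fs A b h x - fs A b h xp := by
  let F : ℕ → ℝ := fun n => fs A b h (Wn x xp n)
  have h0 : F 0 = fs A b h x := by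
    have : Wn x xp 0 = x := by ext j; simp [Wn]
    simp [F, this]
  have hKK : F K = fs A b h xp := by
    have : Wn x xp K = xp := by ext j; simp [Wn]
    simp [F, this]
  have ht : ∑ k : Fin K, (F k.val - F (k.val + 1)) = F 0 - F K := by
    rw [Fin.sum_univ_eq_sum_range (fun n => F n - F (n + 1)), Finset.sum_range_sub']
  rw [← h0, ← hKK, ← ht]
  refine Finset.sum_le_sum fun k _ => ?_
  have hk : Wn x xp (k.val + 1) k = xp k := by simp [Wn]
  have e := fs_update A b h (Wn x xp (k.val + 1)) k (x k)
  rw [Wn_upd, hk] at e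
  have v := step_vi A b h X hXcv hhcv x xp hs k (x k) (hx k)
  simp only [F]
  linarith

lemma step_cost {K M : ℕ} (A : Fin K → Fin M → ℝ) (b : Fin M → ℝ) (h : Fin K → ℝ → ℝ)
    (X : Fin K → Set ℝ) (hXcv : ∀ k, Convex ℝ (X k)) (hhcv : ∀ k, ConvexOn ℝ Set.univ (h k))
    (x xp xs : Fin K → ℝ) (hxs : ∀ k, xs k ∈ X k) (hs : BCDStepS A b h X x xp) :
    fs A b h xp - fs A b h xs ≤
      ∑ j, ∑ k, (if j < k then (xp - xs) j * (xp - x) k * (A j ⬝ᵥ A k) else 0) := by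
  have e := gs_shift A b xp (xs - xp)
  rw [add_sub_cancel] at e
  have hn := sqnorm_nonneg' (∑ k, (xs - xp) k • A k)
  have h1 : fs A b h xp - fs A b h xs ≤
      ∑ k, (-((xs - xp) k * (A k ⬝ᵥ ((∑ k, xp k • A k) - b))) + (h k (xp k) - h k (xs k))) := by
    rw [Finset.sum_add_distrib, Finset.sum_neg_distrib, Finset.sum_sub_distrib, fs, fs, e]
    linarith
  refine h1.trans (Finset.sum_le_sum fun k _ => ?_)
  have v := step_vi A b h X hXcv hhcv x xp hs k (xs k) (hxs k)
  have hr : (∑ j, xp j • A j) - b = ((∑ j, Wn x xp (k.val + 1) j • A j) - b) +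
      ∑ j, (if k < j then (xp - x) j else 0) • A j := by
    rw [sub_add_eq_add_sub, ← Finset.sum_add_distrib]
    congr 1
    refine Finset.sum_congr rfl fun j _ => ?_
    rw [← add_smul]
    congr 1
    simp only [Wn, Fin.lt_def]
    by_cases hj : k.val < j.val
    · have : ¬ j.val < k.val + 1 := by omega
      simp [hj, this]
    · have : j.val < k.val + 1 := by omega
      simp [hj, this]
  have hq : ∑ j, (if k < j then (xp - xs) k * (xp - x) j * (A k ⬝ᵥ A j) else 0) =
      (xp k - xs k) * (A k ⬝ᵥ ∑ j, (if k < j then (xp - x) j else 0) • A j) := by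
    rw [dotProduct_sum, Finset.mul_sum]
    refine Finset.sum_congr rfl fun j _ => ?_
    split_ifs <;> simp [mul_assoc]
  rw [hq, hr, dotProduct_add]
  simp only [Pi.sub_apply] at v ⊢
  linarith

lemma rate_of_rec (D : ℕ → ℝ) (C B : ℝ) (hD : ∀ r, 0 ≤ D r) (hmono : ∀ r, D (r + 1) ≤ D r)
    (hrec : ∀ r, D (r + 1) ^ 2 ≤ C * (D r - D (r + 1))) (h0 : D 0 ≤ B) (hC : C ≤ B) (r : ℕ) :
    D (r + 1) ≤ 3 * B / (r + 1) := by
  have hB : 0 ≤ B := (hD 0).trans h0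
  induction r with
  | zero => have := hmono 0; norm_num at *; linarith
  | succ r ih =>
    have h1 := hrec (r + 1)
    have h2 := hmono (r + 1)
    have h3 := hD (r + 1 + 1)
    have h4 : D (r + 1 + 1) ^ 2 ≤ B * (D (r + 1) - D (r + 1 + 1)) :=
      h1.trans (mul_le_mul_of_nonneg_right hC (by linarith))
    have hr : (0 : ℝ) ≤ r := Nat.cast_nonneg r
    rw [le_div_iff₀ (by positivity)] at ih ⊢
    push_cast
    set u := D (r + 1 + 1)
    set v := D (r + 1)
    set n : ℝ := (r : ℝ) + 1 with hn
    have hn1 : 1 ≤ n := by linarith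
    by_contra hcon
    push Not at hcon
    have hu : 0 < u := by
      by_contra hu0
      have : u = 0 := by linarith
      rw [this] at hcon; linarith
    -- n u² + n B u ≤ B n v ≤ 3 B², while (n+1) u > 3 B
    have h5 : n * u ^ 2 + n * B * u ≤ 3 * B * B := by nlinarith
    have h6 : 3 * B * B ≤ B * (u * (n + 1)) := by nlinarith
    have h7 : n * u ^ 2 ≤ B * u := by nlinarith
    have h8 : n * u ≤ B := by
      by_contra hh
      push Not at hh
      nlinarith
    nlinarith

/-- iteration complexity of cyclic exact BCD with scalar blocks
(`N = 1`, each `A_k ∈ ℝ^M` nonzero, so `L_k = ‖A_k‖²`):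
`Δ^{(r+1)} ≤ 3 max{Δ^{(0)}, 2 R_0² log²(2K)(L²/L_min + L_max²/L_min)}/(r+1)`. -/
theorem bcd_rate_scalar_blocks {K M : ℕ} (hK1 : 1 ≤ K) (hK : 3 ≤ K) (hM : 1 ≤ M)
    (A : Fin K → Fin M → ℝ) (hA : ∀ k, A k ≠ 0) (b : Fin M → ℝ)
    (X : Fin K → Set ℝ) (h : Fin K → ℝ → ℝ)
    (hXne : ∀ k, (X k).Nonempty) (hXcl : ∀ k, IsClosed (X k))
    (hXcv : ∀ k, Convex ℝ (X k))
    (hhcv : ∀ k, ConvexOn ℝ Set.univ (h k))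
    (hhlsc : ∀ k, LowerSemicontinuous (h k))
    (x : ℕ → Fin K → ℝ) (hx0 : ∀ k, x 0 k ∈ X k)
    (hstep : ∀ r : ℕ, BCDStepS A b h X (x r) (x (r + 1)))
    (xstar : Fin K → ℝ) (hxstarX : ∀ k, xstar k ∈ X k)
    (hxstar : ∀ y : Fin K → ℝ, (∀ k, y k ∈ X k) → fs A b h xstar ≤ fs A b h y)
    (R0 : ℝ)
    (hR0 : ∀ z : Fin K → ℝ, (∀ k, z k ∈ X k) → fs A b h z ≤ fs A b h (x 0) →
      ∀ y : Fin K → ℝ, (∀ k, y k ∈ X k) →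
        (∀ z' : Fin K → ℝ, (∀ k, z' k ∈ X k) → fs A b h y ≤ fs A b h z') →
        Real.sqrt (sqnorm (z - y)) ≤ R0)
    (r : ℕ) :
    fs A b h (x (r + 1)) - fs A b h xstar ≤
      3 * max (fs A b h (x 0) - fs A b h xstar)
          (2 * R0 ^ 2 * Real.log (2 * (K : ℝ)) ^ 2 *
            (lamMaxS A ^ 2 / minOf hK1 (fun k => sqnorm (A k)) +
              maxOf hK1 (fun k => sqnorm (A k)) ^ 2 /
                minOf hK1 (fun k => sqnorm (A k)))) /
        (r + 1) := by
  classical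
  have hmem : ∀ r k, x r k ∈ X k := by
    intro r
    cases r with
    | zero => exact hx0
    | succ r => exact fun k => (hstep r k).1
  have hdesc := fun r => step_descent A b h X hXcv hhcv (x r) (x (r + 1)) (hmem r) (hstep r)
  have hmono : ∀ r, fs A b h (x (r + 1)) ≤ fs A b h (x r) := by
    intro r
    have h1 := hdesc r
    have h2 : 0 ≤ ∑ k, 1 / 2 * (x r k - x (r + 1) k) ^ 2 * sqnorm (A k) :=
      Finset.sum_nonneg fun k _ => by have := sqnorm_nonneg' (A k); positivity
    linarith
  have hle0 : ∀ r, fs A b h (x r) ≤ fs A b h (x 0) := by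
    intro r
    induction r with
    | zero => exact le_rfl
    | succ r ih => exact (hmono r).trans ih
  set Lmin := minOf hK1 (fun k => sqnorm (A k)) with hLmin
  have hLpos : 0 < Lmin := by
    rw [hLmin, minOf, Finset.lt_inf'_iff]
    exact fun k _ => sqnorm_pos' (hA k)
  have hLle : ∀ k, Lmin ≤ sqnorm (A k) := fun k => Finset.inf'_le _ (Finset.mem_univ k)
  set L := lamMaxS A with hL
  set m := Nat.log 2 K + 1 with hm
  have hKm : K ≤ 2 ^ m := (Nat.lt_pow_succ_log_self (by norm_num) K).le
  have hmlog : (m : ℝ) / 2 ≤ Real.log (2 * (K : ℝ)) := by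
    have h1 : 2 ^ m ≤ 2 * K := by
      have := Nat.pow_log_le_self 2 (show K ≠ 0 by omega)
      rw [hm, pow_succ]; omega
    have h2 : ((2 : ℝ)) ^ m ≤ 2 * (K : ℝ) := by exact_mod_cast h1
    have h3 := Real.log_le_log (by positivity) h2
    rw [Real.log_pow] at h3
    have h4 := Real.log_two_gt_d9
    have h5 : (0 : ℝ) ≤ m := Nat.cast_nonneg m
    nlinarith
  have hm2 : ((m : ℝ) / 2) ^ 2 ≤ Real.log (2 * (K : ℝ)) ^ 2 :=
    pow_le_pow_left₀ (by positivity) hmlog 2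
  refine rate_of_rec (fun r => fs A b h (x r) - fs A b h xstar) _ _ ?_ ?_ ?_
    (le_max_left _ _) (le_max_right _ _) r
  · intro r
    have := hxstar (x r) (hmem r)
    linarith
  · intro r
    have := hmono r
    linarith
  intro r
  set δ := fs A b h (x r) - fs A b h xstar - (fs A b h (x (r + 1)) - fs A b h xstar) with hδ
  have hδ0 : 0 ≤ δ := by have := hmono r; rw [hδ]; linarith
  have hnn : 0 ≤ fs A b h (x (r + 1)) - fs A b h xstar := by
    have := hxstar (x (r + 1)) (hmem (r + 1)); linarith
  have hcost := step_cost A b h X hXcv hhcv (x r) (x (r + 1)) xstar hxstarX (hstep r)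
  have hsq := tri_sq A (x (r + 1) - xstar) (x (r + 1) - x r) m hKm
  have hE : sqnorm (x (r + 1) - xstar) ≤ R0 ^ 2 := by
    have h1 := hR0 (x (r + 1)) (hmem _) (hle0 _) xstar hxstarX hxstar
    have h2 := pow_le_pow_left₀ (Real.sqrt_nonneg _) h1 2
    rwa [Real.sq_sqrt (sqnorm_nonneg' _)] at h2
  have hd : sqnorm (x (r + 1) - x r) ≤ 2 * δ / Lmin := by
    rw [le_div_iff₀ hLpos]
    have h1 := hdesc r
    have h2 : 1 / 2 * (sqnorm (x (r + 1) - x r) * Lmin) ≤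
        ∑ k, 1 / 2 * (x r k - x (r + 1) k) ^ 2 * sqnorm (A k) := by
      rw [sqnorm, Finset.sum_mul, Finset.mul_sum]
      refine Finset.sum_le_sum fun k _ => ?_
      have := mul_le_mul_of_nonneg_left (hLle k) (sq_nonneg (x r k - x (r + 1) k))
      simp only [Pi.sub_apply]
      nlinarith
    rw [hδ]; linarith
  have hE0 := sqnorm_nonneg' (x (r + 1) - xstar)
  have hd0 := sqnorm_nonneg' (x (r + 1) - x r)
  calc (fs A b h (x (r + 1)) - fs A b h xstar) ^ 2
      ≤ (m * L / 2) ^ 2 * sqnorm (x (r + 1) - xstar) * sqnorm (x (r + 1) - x r) :=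
        (pow_le_pow_left₀ hnn hcost 2).trans hsq
    _ = ((m : ℝ) / 2) ^ 2 * L ^ 2 * sqnorm (x (r + 1) - xstar) * sqnorm (x (r + 1) - x r) := by
        ring
    _ ≤ Real.log (2 * (K : ℝ)) ^ 2 * L ^ 2 * R0 ^ 2 * (2 * δ / Lmin) := by gcongr
    _ = 2 * R0 ^ 2 * Real.log (2 * (K : ℝ)) ^ 2 * (L ^ 2 / Lmin + 0) * δ := by ring
    _ ≤ _ := by
        gcongr
        positivity
end

section
/- Suppose the second derivatives of g are uniformly bounded: |∂²g/∂x_i∂x_j (x)| ≤ L_{ij} ≤ √(L_i L_j) for all x, and ‖∇g(x) − ∇g(y)‖ ≤ L‖x − y‖ for all x, y. If the cyclic coordinate gradient descent stepsize parameters satisfy P_k ≥ L_max := max_j L_j for all k, then for all r ≥ 1, g(x^{(r)}) − g(x*) ≤ 2 ( P_max + min{ K L², (Σ_{k=1}^K L_k)² } / P_min ) R_0² / r. -/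
open Finset

/-- The partial derivative `∂_k g (x)`. -/
noncomputable def pder {K : ℕ} (g : (Fin K → ℝ) → ℝ) (k : Fin K) (x : Fin K → ℝ) : ℝ :=
  fderiv ℝ g x (Pi.single k 1)

/-- The second partial derivative `∂²g/∂x_i∂x_j (x) = ∂_i (∂_j g) (x)`. -/
noncomputable def pder2 {K : ℕ} (g : (Fin K → ℝ) → ℝ) (i j : Fin K) (x : Fin K → ℝ) : ℝ :=
  fderiv ℝ (fun y => fderiv ℝ g y (Pi.single j 1)) x (Pi.single i 1)

/-- One cycle of cyclic coordinate gradient descent (CGD) from `x` with stepsizes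
`1/P_k`: `w_1 = x`, `w_{k+1} = w_k − (1/P_k) ∂_k g(w_k) e_k`, and `x' = w_{K+1}`. -/
def CGDCycle {K : ℕ} (g : (Fin K → ℝ) → ℝ) (P : Fin K → ℝ)
    (x : Fin K → ℝ) (w : Fin (K + 1) → Fin K → ℝ) (x' : Fin K → ℝ) : Prop :=
  w 0 = x ∧
  (∀ k : Fin K, w k.succ =
    w k.castSucc - ((P k)⁻¹ * pder g k (w k.castSucc)) • (Pi.single k 1 : Fin K → ℝ)) ∧
  x' = w (Fin.last K)

/-- Spectral (ℓ2 operator) norm of a real `K × K` matrix, characterized as the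
maximum of `‖Hv‖` over unit vectors `v`. -/
noncomputable def specNorm {K : ℕ} (H : Matrix (Fin K) (Fin K) ℝ) : ℝ :=
  sSup {r : ℝ | ∃ v : Fin K → ℝ, sqnorm v = 1 ∧ r = Real.sqrt (sqnorm (H.mulVec v))}

/-- The "moving-iterate Hessian" `H(ξ)`: the strictly lower triangular matrix
whose `(k,j)` entry, for `j < k`, is `∂²g/∂x_k∂x_j (ξ_k)`, and `0` otherwise. -/
noncomputable def Hmat {K : ℕ} (g : (Fin K → ℝ) → ℝ) (ξ : Fin K → Fin K → ℝ) :
    Matrix (Fin K) (Fin K) ℝ :=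
  Matrix.of fun k j => if j < k then pder2 g k j (ξ k) else 0

lemma aux_pder_sum {K : ℕ} (g : (Fin K → ℝ) → ℝ) (x v : Fin K → ℝ) :
    fderiv ℝ g x v = ∑ k, v k * pder g k x := by
  have h : v = ∑ k, v k • (Pi.single k 1 : Fin K → ℝ) := by
    ext j
    simp [Finset.sum_apply, Pi.single_apply]
  conv_lhs => rw [h]
  simp only [map_sum, map_smul, smul_eq_mul, pder]

lemma aux_diff {K : ℕ} {g : (Fin K → ℝ) → ℝ} (hg : ContDiff ℝ 2 g) : Differentiable ℝ g :=
  hg.differentiable (by norm_num)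

lemma aux_pder_diff {K : ℕ} {g : (Fin K → ℝ) → ℝ} (hg : ContDiff ℝ 2 g) (k : Fin K) :
    Differentiable ℝ (pder g k) := by
  have h1 : ContDiff ℝ 1 (fderiv ℝ g) := hg.fderiv_right (by norm_num)
  have h2 : Differentiable ℝ (fderiv ℝ g) := h1.differentiable (by norm_num)
  intro x
  exact (h2 x).clm_apply (differentiableAt_const _)

lemma aux_line {K : ℕ} {f : (Fin K → ℝ) → ℝ} (hf : Differentiable ℝ f) (x v : Fin K → ℝ) (t : ℝ) :
    HasDerivAt (fun s : ℝ => f (x + s • v)) (fderiv ℝ f (x + t • v) v) t := by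
  have h1 : HasDerivAt (fun s : ℝ => x + s • v) v t := by
    simpa using ((hasDerivAt_id t).smul_const v).const_add x
  exact (hf (x + t • v)).hasFDerivAt.comp_hasDerivAt t h1

lemma aux_convex {K : ℕ} {g : (Fin K → ℝ) → ℝ} (hg : ContDiff ℝ 2 g)
    (hgcv : ConvexOn ℝ Set.univ g) (x y : Fin K → ℝ) :
    g x - g y ≤ ∑ k, (x k - y k) * pder g k x := by
  have hl := aux_line (aux_diff hg) x (y - x) 0
  have hc : ConvexOn ℝ Set.univ (fun s : ℝ => g (x + s • (y - x))) := by
    refine ⟨convex_univ, ?_⟩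
    intro a _ b _ p q hp hq hpq
    have := hgcv.2 (Set.mem_univ (x + a • (y - x))) (Set.mem_univ (x + b • (y - x))) hp hq hpq
    convert this using 2
    ext j
    simp only [Pi.add_apply, Pi.smul_apply, smul_eq_mul, Pi.sub_apply]
    have : p = 1 - q := by linarith
    subst this
    ring
  have := hc.le_slope_of_hasDerivAt (Set.mem_univ 0) (Set.mem_univ 1) one_pos hl
  rw [aux_pder_sum] at this
  simp [slope_def_field] at this
  have h2 : ∑ k, (x k - y k) * pder g k x = - ∑ k, (y k - x k) * pder g k x := by
    rw [← Finset.sum_neg_distrib]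
    exact Finset.sum_congr rfl fun k _ => by ring
  linarith

lemma aux_pder_lip {K : ℕ} {g : (Fin K → ℝ) → ℝ} (hg : ContDiff ℝ 2 g) (L : Fin K → ℝ)
    (hH : ∀ (i j : Fin K) (x : Fin K → ℝ), |pder2 g i j x| ≤ Real.sqrt (L i * L j))
    (k : Fin K) (x y : Fin K → ℝ) :
    |pder g k y - pder g k x| ≤ ∑ j, |y j - x j| * Real.sqrt (L j * L k) := by
  have h := Convex.norm_image_sub_le_of_norm_hasDerivWithin_le
    (f := fun s : ℝ => pder g k (x + s • (y - x)))
    (f' := fun s : ℝ => fderiv ℝ (pder g k) (x + s • (y - x)) (y - x))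
    (s := Set.univ) (x := 0) (y := 1)
    (C := ∑ j, |y j - x j| * Real.sqrt (L j * L k))
    (fun t _ => (aux_line (aux_pder_diff hg k) x (y - x) t).hasDerivWithinAt)
    (fun t _ => by
      rw [aux_pder_sum, Real.norm_eq_abs]
      refine (Finset.abs_sum_le_sum_abs _ _).trans (Finset.sum_le_sum fun j _ => ?_)
      rw [abs_mul]
      exact mul_le_mul_of_nonneg_left (hH j k _) (abs_nonneg _))
    convex_univ (Set.mem_univ _) (Set.mem_univ _)
  simpa using h

lemma aux_pder_lip_sq {K : ℕ} {g : (Fin K → ℝ) → ℝ} (hg : ContDiff ℝ 2 g) (L : Fin K → ℝ)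
    (hL : ∀ k, 0 ≤ L k)
    (hH : ∀ (i j : Fin K) (x : Fin K → ℝ), |pder2 g i j x| ≤ Real.sqrt (L i * L j))
    (k : Fin K) (x y : Fin K → ℝ) :
    (pder g k y - pder g k x) ^ 2 ≤ L k * (∑ j, L j) * sqnorm (y - x) := by
  have h := aux_pder_lip hg L hH k x y
  have h2 := Finset.sum_mul_sq_le_sq_mul_sq Finset.univ (fun j => |y j - x j|)
    (fun j => Real.sqrt (L j * L k))
  have h3 : ∑ j, (Real.sqrt (L j * L k)) ^ 2 = L k * ∑ j, L j := by
    rw [Finset.mul_sum]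
    refine Finset.sum_congr rfl fun j _ => ?_
    rw [Real.sq_sqrt (mul_nonneg (hL j) (hL k)), mul_comm]
  have h4 : ∑ j, |y j - x j| ^ 2 = sqnorm (y - x) := by
    simp [sqnorm]
  rw [h3, h4] at h2
  have h5 := pow_le_pow_left₀ (abs_nonneg _) h 2
  rw [sq_abs] at h5
  linarith

lemma aux_descent {K : ℕ} {g : (Fin K → ℝ) → ℝ} (hg : ContDiff ℝ 2 g) (Lk : ℝ) (k : Fin K)
    (hLip : ∀ (x : Fin K → ℝ) (t : ℝ),
      |pder g k (x + t • (Pi.single k 1 : Fin K → ℝ)) - pder g k x| ≤ Lk * |t|)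
    (x : Fin K → ℝ) (s : ℝ) (hs : 0 ≤ s) :
    g (x - (s * pder g k x) • (Pi.single k 1 : Fin K → ℝ)) ≤
      g x - s * pder g k x ^ 2 + Lk / 2 * s ^ 2 * pder g k x ^ 2 := by
  set p := pder g k x with hp
  set e : Fin K → ℝ := Pi.single k 1 with he
  have hd : ∀ t : ℝ, HasDerivAt
      (fun t : ℝ => g (x + t • ((-p) • e)) + t * p ^ 2 - Lk / 2 * t ^ 2 * p ^ 2)
      ((-p) * pder g k (x + (t * (-p)) • e) + p ^ 2 - Lk * t * p ^ 2) t := by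
    intro t
    have h1 := aux_line (aux_diff hg) x ((-p) • e) t
    have h2 : HasDerivAt (fun t : ℝ => t * p ^ 2) (p ^ 2) t := by
      simpa using (hasDerivAt_id t).mul_const (p ^ 2)
    have h3 : HasDerivAt (fun t : ℝ => Lk / 2 * t ^ 2 * p ^ 2) (Lk * t * p ^ 2) t := by
      refine (((hasDerivAt_pow 2 t).const_mul (Lk / 2)).mul_const (p ^ 2)).congr_deriv ?_
      push_cast
      ring
    refine ((h1.add h2).sub h3).congr_deriv ?_
    rw [map_smul, smul_smul, smul_eq_mul]
    rfl
  have ha : AntitoneOn (fun t : ℝ => g (x + t • ((-p) • e)) + t * p ^ 2 - Lk / 2 * t ^ 2 * p ^ 2)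
      (Set.Ici 0) := by
    apply antitoneOn_of_deriv_nonpos (convex_Ici 0)
    · exact fun t _ => (hd t).continuousAt.continuousWithinAt
    · exact fun t _ => (hd t).differentiableAt.differentiableWithinAt
    · intro t ht
      rw [interior_Ici] at ht
      have ht0 : (0 : ℝ) < t := ht
      rw [(hd t).deriv]
      have h := hLip x (t * (-p))
      rw [abs_mul, abs_neg, abs_of_pos ht0] at h
      have h6 : (-p) * (pder g k (x + (t * (-p)) • e) - p) ≤ |p| * (Lk * (t * |p|)) := by
        calc _ ≤ |(-p) * (pder g k (x + (t * (-p)) • e) - p)| := le_abs_self _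
          _ = |p| * |pder g k (x + (t * (-p)) • e) - p| := by rw [abs_mul, abs_neg]
          _ ≤ _ := mul_le_mul_of_nonneg_left h (abs_nonneg _)
      have h7 : |p| * (Lk * (t * |p|)) = Lk * t * p ^ 2 := by
        rw [← sq_abs p]; ring
      nlinarith
  have := ha (Set.mem_Ici.2 le_rfl) (Set.mem_Ici.2 hs) hs
  simp only [zero_smul, add_zero, zero_mul] at this
  have h8 : x + s • ((-p) • e) = x - (s * p) • e := by
    rw [smul_smul, mul_neg, neg_smul, sub_eq_add_neg]
  rw [h8] at this
  nlinarith

lemma aux_w {K : ℕ} (d x : Fin K → ℝ) (w : Fin (K + 1) → Fin K → ℝ) (h0 : w 0 = x)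
    (hs : ∀ k : Fin K, w k.succ = w k.castSucc - d k • (Pi.single k 1 : Fin K → ℝ))
    (i : Fin (K + 1)) (j : Fin K) :
    w i j = x j - if j.castSucc < i then d j else 0 := by
  induction i using Fin.induction with
  | zero => simp [h0]
  | succ k ih =>
    rw [hs k]
    simp only [Pi.sub_apply, Pi.smul_apply, smul_eq_mul, ih, Pi.single_apply, Fin.lt_def,
      Fin.val_castSucc, Fin.val_succ, Fin.ext_iff]
    by_cases h1 : (j : ℕ) = k
    · have : j = k := Fin.ext h1
      subst this
      simp
    · by_cases h2 : (j : ℕ) < k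
      · simp [h1, h2, Nat.lt_succ_of_lt h2]
      · have : ¬ (j : ℕ) < k + 1 := by omega
        simp [h1, h2, this]

lemma aux_tel {K : ℕ} (f : Fin (K + 1) → ℝ) :
    ∑ k : Fin K, (f k.castSucc - f k.succ) = f 0 - f (Fin.last K) := by
  have h1 := Fin.sum_univ_succ f
  have h2 := Fin.sum_univ_castSucc f
  rw [Finset.sum_sub_distrib]
  linarith

/-- One cycle of the analysis. -/
lemma aux_cycle {K : ℕ} {g : (Fin K → ℝ) → ℝ} (hg : ContDiff ℝ 2 g)
    (hgcv : ConvexOn ℝ Set.univ g) (L : Fin K → ℝ)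
    (hLip : ∀ (k : Fin K) (x : Fin K → ℝ) (t : ℝ),
      |pder g k (x + t • (Pi.single k 1 : Fin K → ℝ)) - pder g k x| ≤ L k * |t|)
    (P : Fin K → ℝ) (pm : ℝ) (hpm : 0 < pm) (hP : ∀ k, pm ≤ P k) (hLP : ∀ k, L k ≤ P k)
    (M : ℝ) (hM : ∀ (S : ℝ) (y : Fin K → ℝ) (u : Fin K → Fin K → ℝ),
      (∀ k, sqnorm (y - u k) ≤ S) → ∑ k, (pder g k y - pder g k (u k)) ^ 2 ≤ M * S)
    (hM0 : 0 ≤ M)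
    (x x' xs : Fin K → ℝ) (w : Fin (K + 1) → Fin K → ℝ) (hc : CGDCycle g P x w x') :
    ∃ Q X : ℝ, 0 ≤ Q ∧ Q / 2 ≤ g x - g x' ∧ X ^ 2 ≤ M / pm * Q * sqnorm (x' - xs) ∧
      g x' - g xs ≤ (∑ k, P k * (x k - xs k) ^ 2 - ∑ k, P k * (x' k - xs k) ^ 2 - Q) / 2 + X := by
  obtain ⟨h0, hs, hl⟩ := hc
  have hPpos : ∀ k, 0 < P k := fun k => hpm.trans_le (hP k)
  set d : Fin K → ℝ := fun k => (P k)⁻¹ * pder g k (w k.castSucc) with hd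
  have hw := aux_w d x w h0 hs
  have hx' : ∀ j, x' j = x j - d j := fun j => by
    rw [hl, hw]; simp [Fin.castSucc_lt_last]
  have hPd : ∀ k, pder g k (w k.castSucc) = P k * d k := fun k => by
    have := (hPpos k).ne'
    simp only [hd]; field_simp
  refine ⟨∑ k, P k * d k ^ 2,
    ∑ k, (pder g k x' - pder g k (w k.castSucc)) * (x' k - xs k), ?_, ?_, ?_, ?_⟩
  · exact Finset.sum_nonneg fun k _ => mul_nonneg (hPpos k).le (sq_nonneg _)
  · have ht := aux_tel (fun i => g (w i))
    rw [h0, ← hl] at ht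
    rw [← ht, Finset.sum_div]
    refine Finset.sum_le_sum fun k _ => ?_
    have hde := aux_descent hg (L k) k (hLip k) (w k.castSucc) (P k)⁻¹
      (inv_nonneg.2 (hPpos k).le)
    rw [← hs k] at hde
    have e1 : (P k)⁻¹ * pder g k (w k.castSucc) ^ 2 = P k * d k ^ 2 := by
      rw [hPd]; have := (hPpos k).ne'; field_simp
    have e2 : L k / 2 * (P k)⁻¹ ^ 2 * pder g k (w k.castSucc) ^ 2 = L k / 2 * d k ^ 2 := by
      rw [hPd]; have := (hPpos k).ne'; field_simp
    rw [e1, e2] at hde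
    have := mul_le_mul_of_nonneg_right (hLP k) (sq_nonneg (d k))
    linarith
  · have hcs := Finset.sum_mul_sq_le_sq_mul_sq Finset.univ
      (fun k => pder g k x' - pder g k (w k.castSucc)) (fun k => x' k - xs k)
    have h4 : ∑ k, (x' k - xs k) ^ 2 = sqnorm (x' - xs) := by simp [sqnorm]
    have hS : ∀ k : Fin K, sqnorm (x' - w k.castSucc) ≤ ∑ j, d j ^ 2 := by
      intro k
      refine Finset.sum_le_sum fun j _ => ?_
      rw [Pi.sub_apply, hx', hw]
      split_ifs
      · simp [sq_nonneg]
      · apply le_of_eq; ring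
    have h5 := hM _ x' (fun k => w k.castSucc) hS
    have h6 : pm * ∑ j, d j ^ 2 ≤ ∑ k, P k * d k ^ 2 := by
      rw [Finset.mul_sum]
      exact Finset.sum_le_sum fun j _ => mul_le_mul_of_nonneg_right (hP j) (sq_nonneg _)
    have h7 : M * ∑ j, d j ^ 2 ≤ M / pm * ∑ k, P k * d k ^ 2 := by
      calc M * ∑ j, d j ^ 2 = M / pm * (pm * ∑ j, d j ^ 2) := by field_simp
        _ ≤ _ := mul_le_mul_of_nonneg_left h6 (div_nonneg hM0 hpm.le)
    rw [h4] at hcs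
    refine hcs.trans (mul_le_mul_of_nonneg_right (h5.trans h7) ?_)
    exact Finset.sum_nonneg fun _ _ => sq_nonneg _
  · refine (aux_convex hg hgcv x' xs).trans (le_of_eq ?_)
    rw [← Finset.sum_sub_distrib, ← Finset.sum_sub_distrib, Finset.sum_div,
      ← Finset.sum_add_distrib]
    refine Finset.sum_congr rfl fun k _ => ?_
    rw [hPd, hx']
    ring

/-- Corollary 1: cyclic CGD with stepsizes `P_k ≥ L_max`
satisfies `g(x^{(r)}) − g(x*) ≤ 2 (P_max + min{K L², (Σ_k L_k)²}/P_min) R_0² / r`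
for all `r ≥ 1`. -/
theorem cgd_rate_concrete {K : ℕ} (hK : 1 ≤ K)
    (g : (Fin K → ℝ) → ℝ) (hg : ContDiff ℝ 2 g) (hgcv : ConvexOn ℝ Set.univ g)
    (Lip : ℝ)
    (hgLip : ∀ x y : Fin K → ℝ,
      Real.sqrt (sqnorm (fun k => pder g k x - pder g k y)) ≤
        Lip * Real.sqrt (sqnorm (x - y)))
    (L : Fin K → ℝ)
    (hLip : ∀ (k : Fin K) (x : Fin K → ℝ) (t : ℝ),
      |pder g k (x + t • (Pi.single k 1 : Fin K → ℝ)) - pder g k x| ≤ L k * |t|)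
    (hH : ∀ (i j : Fin K) (x : Fin K → ℝ), |pder2 g i j x| ≤ Real.sqrt (L i * L j))
    (P : Fin K → ℝ) (hP : ∀ k, maxOf hK L ≤ P k)
    (xstar : Fin K → ℝ) (hxstar : ∀ y : Fin K → ℝ, g xstar ≤ g y)
    (x : ℕ → Fin K → ℝ) (w : ℕ → Fin (K + 1) → Fin K → ℝ)
    (hcycle : ∀ r : ℕ, CGDCycle g P (x r) (w r) (x (r + 1)))
    (R0 : ℝ)
    (hR0 : ∀ z : Fin K → ℝ, g z ≤ g (x 0) →
      ∀ y : Fin K → ℝ, (∀ y' : Fin K → ℝ, g y ≤ g y') →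
        Real.sqrt (sqnorm (z - y)) ≤ R0)
    (r : ℕ) (hr : 1 ≤ r) :
    g (x r) - g xstar ≤
      2 * (maxOf hK P +
        min ((K : ℝ) * Lip ^ 2) ((∑ k, L k) ^ 2) / minOf hK P) * R0 ^ 2 / r := by
  have hL : ∀ k, 0 ≤ L k := fun k => by
    have := (abs_nonneg _).trans (hLip k 0 1)
    simpa using this
  have hLmax : ∀ k, L k ≤ maxOf hK L := fun k => Finset.le_sup' L (Finset.mem_univ k)
  have hPmax : ∀ k, P k ≤ maxOf hK P := fun k => Finset.le_sup' P (Finset.mem_univ k)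
  have hPmin : ∀ k, minOf hK P ≤ P k := fun k => Finset.inf'_le P (Finset.mem_univ k)
  have hmm : maxOf hK L ≤ minOf hK P := Finset.le_inf' _ _ fun k _ => hP k
  have hm0 : 0 ≤ maxOf hK L := (hL ⟨0, hK⟩).trans (hLmax _)
  have hA0 : 0 ≤ maxOf hK P := hm0.trans ((hP ⟨0, hK⟩).trans (hPmax _))
  have hrpos : (0 : ℝ) < r := by exact_mod_cast hr
  set A := maxOf hK P
  set pm := minOf hK P
  set M := min ((K : ℝ) * Lip ^ 2) ((∑ k, L k) ^ 2) with hMdef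
  have hM0 : 0 ≤ M := le_min (by positivity) (by positivity)
  have hB0 : 0 ≤ M / pm := div_nonneg hM0 (hm0.trans hmm)
  have hsq0 : ∀ v : Fin K → ℝ, 0 ≤ sqnorm v := fun v => Finset.sum_nonneg fun _ _ => sq_nonneg _
  rcases (hm0.trans hmm).eq_or_lt with hpm | hpm
  · -- degenerate case
    have hL0 : ∀ k, L k = 0 := fun k => le_antisymm (by
      have := hLmax k
      linarith) (hL k)
    have hz : fderiv ℝ g xstar = 0 :=
      IsLocalMin.fderiv_eq_zero (Filter.Eventually.of_forall hxstar)
    have hp : ∀ k, pder g k (x r) = 0 := fun k => by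
      have h1 := aux_pder_lip_sq hg L hL hH k xstar (x r)
      rw [hL0 k] at h1
      have h2 : pder g k xstar = 0 := by simp [pder, hz]
      rw [h2] at h1
      nlinarith [sq_nonneg (pder g k (x r))]
    have h3 := aux_convex hg hgcv (x r) xstar
    simp only [hp, mul_zero, Finset.sum_const_zero] at h3
    refine h3.trans ?_
    positivity
  have hM : ∀ (S : ℝ) (y : Fin K → ℝ) (u : Fin K → Fin K → ℝ),
      (∀ k, sqnorm (y - u k) ≤ S) → ∑ k, (pder g k y - pder g k (u k)) ^ 2 ≤ M * S := by
    intro S y u hS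
    have hS0 : 0 ≤ S := (hsq0 _).trans (hS ⟨0, hK⟩)
    rw [hMdef, min_mul_of_nonneg _ _ hS0]
    refine le_min ?_ ?_
    · have : ∀ k ∈ Finset.univ, (pder g k y - pder g k (u k)) ^ 2 ≤ Lip ^ 2 * S := by
        intro k _
        have h1 := pow_le_pow_left₀ (Real.sqrt_nonneg _) (hgLip y (u k)) 2
        rw [mul_pow, Real.sq_sqrt (hsq0 _), Real.sq_sqrt (hsq0 _)] at h1
        have h2 : (pder g k y - pder g k (u k)) ^ 2 ≤
            sqnorm (fun j => pder g j y - pder g j (u k)) :=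
          Finset.single_le_sum (f := fun j => (pder g j y - pder g j (u k)) ^ 2)
            (fun _ _ => sq_nonneg _) (Finset.mem_univ k)
        exact h2.trans (h1.trans (mul_le_mul_of_nonneg_left (hS k) (sq_nonneg _)))
      have h3 := Finset.sum_le_sum this
      simp only [Finset.sum_const, Finset.card_univ, Fintype.card_fin, nsmul_eq_mul] at h3
      linarith
    · have hs0 : 0 ≤ ∑ j, L j := Finset.sum_nonneg fun j _ => hL j
      calc ∑ k, (pder g k y - pder g k (u k)) ^ 2
          ≤ ∑ k, L k * ((∑ j, L j) * S) := Finset.sum_le_sum fun k _ => by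
            refine (aux_pder_lip_sq hg L hL hH k (u k) y).trans ?_
            rw [mul_assoc]
            exact mul_le_mul_of_nonneg_left (mul_le_mul_of_nonneg_left (hS k) hs0) (hL k)
        _ = (∑ k, L k) ^ 2 * S := by rw [← Finset.sum_mul]; ring
  have hcyc := fun s => aux_cycle hg hgcv L hLip P pm hpm hPmin
    (fun k => (hLmax k).trans (hP k)) M hM hM0 (x s) (x (s + 1)) xstar (w s) (hcycle s)
  have hmono : ∀ s, g (x s) ≤ g (x 0) := by
    intro s
    induction s with
    | zero => exact le_rfl
    | succ s ih =>
      obtain ⟨Q, X, h1, h2, -, -⟩ := hcyc s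
      linarith
  have hR : ∀ s, sqnorm (x s - xstar) ≤ R0 ^ 2 := fun s => by
    have h1 := pow_le_pow_left₀ (Real.sqrt_nonneg _) (hR0 _ (hmono s) xstar hxstar) 2
    rwa [Real.sq_sqrt (hsq0 _)] at h1
  have hT : ∀ s, ∑ k, P k * (x s k - xstar k) ^ 2 ≤ A * R0 ^ 2 := fun s => by
    refine le_trans ?_ (mul_le_mul_of_nonneg_left (hR s) hA0)
    unfold sqnorm
    rw [Finset.mul_sum]
    exact Finset.sum_le_sum fun k _ => mul_le_mul_of_nonneg_right (hPmax k) (sq_nonneg _)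
  have hT0 : ∀ s, 0 ≤ ∑ k, P k * (x s k - xstar k) ^ 2 := fun s =>
    Finset.sum_nonneg fun k _ => mul_nonneg (hpm.le.trans (hPmin k)) (sq_nonneg _)
  set B := M / pm
  have main : ∀ s : ℕ, (s : ℝ) * (s + 1) / 2 * (g (x s) - g xstar) +
      s / 2 * ∑ k, P k * (x s k - xstar k) ^ 2 ≤ s * (A / 2 + B) * R0 ^ 2 := by
    intro s
    induction s with
    | zero => simp
    | succ s ih =>
      obtain ⟨Q, X, hQ, hdes, hX, hgap⟩ := hcyc s
      have hTs := hT s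
      push_cast
      generalize (∑ k, P k * (x s k - xstar k) ^ 2) = T at *
      generalize (∑ k, P k * (x (s + 1) k - xstar k) ^ 2) = T' at *
      have hn : (0 : ℝ) ≤ s := Nat.cast_nonneg s
      generalize (s : ℝ) = n at *
      have hX2 : X ^ 2 ≤ B * Q * R0 ^ 2 :=
        hX.trans (mul_le_mul_of_nonneg_left (hR _) (mul_nonneg hB0 hQ))
      have hNX : (n + 1) * X ≤ B * R0 ^ 2 + (n + 1) ^ 2 * Q / 4 := by
        refine (le_abs_self _).trans (abs_le_of_sq_le_sq ?_ (by positivity))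
        have h1 : ((n + 1) * X) ^ 2 ≤ (n + 1) ^ 2 * (B * Q * R0 ^ 2) := by
          rw [mul_pow]; exact mul_le_mul_of_nonneg_left hX2 (sq_nonneg _)
        nlinarith [sq_nonneg (B * R0 ^ 2 - (n + 1) ^ 2 * Q / 4)]
      have h1 := mul_le_mul_of_nonneg_left hgap (by positivity : 0 ≤ n + 1)
      have h2 := mul_le_mul_of_nonneg_left hdes (by positivity : 0 ≤ n * (n + 1) / 2)
      have h3 : 0 ≤ (n + 1) * Q := by positivity
      nlinarith
  have hm := main r
  have h1 := hT0 r
  have hΔ : 0 ≤ g (x r) - g xstar := sub_nonneg.2 (hxstar _)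
  rw [le_div_iff₀ hrpos]
  have h2 : (r : ℝ) * ((r + 1) / 2 * (g (x r) - g xstar)) ≤ r * ((A / 2 + B) * R0 ^ 2) := by
    have : 0 ≤ (r : ℝ) / 2 * ∑ k, P k * (x r k - xstar k) ^ 2 := by positivity
    linarith
  have h3 := le_of_mul_le_mul_left h2 hrpos
  have h4 : 0 ≤ A * R0 ^ 2 := by positivity
  linarith
end
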